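/- Let L > 0, let Q = [0,L]³ ⊆ ℝ³ be the cube of side length L, and let d : ℝ³ → ℝ be differentiable on an open set containing Q with ‖∇d(z)‖ = 1 for all z ∈ Q (the Eikonal property of a signed distance function). Define the trilinear interpolant d_tl(x) = Σ_{v ∈ {0,1}³} λ_v(x)·d(x_v). Then for every x ∈ Q, |d_tl(x) − d(x)| ≤ (√3/2)·L. -/

import Mathlib

/-- The vertex of the cube `[0,L]³` indexed by `v ∈ {0,1}³`:
`(x_v) i = L` if `v i = 1` and `0` otherwise. -/
noncomputable def cubeVertex (L : ℝ) (v : Fin 3 → Bool) :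
    EuclideanSpace ℝ (Fin 3) :=
  (EuclideanSpace.equiv (Fin 3) ℝ).symm fun i => if v i then L else 0

/-- The trilinear weight of the vertex `v ∈ {0,1}³` of the cube `[0,L]³`
at the point `x`: `λ_v(x) = ∏ i, (x i / L if v i = 1 else (L - x i) / L)`. -/
noncomputable def triWeight (L : ℝ) (v : Fin 3 → Bool)
    (x : EuclideanSpace ℝ (Fin 3)) : ℝ :=
  ∏ i, if v i then x i / L else (L - x i) / L

/-!
For `x` in a box, the multilinear weights at `x` are a product probability distribution on the
vertices, with mean `x`. The interpolation error of a `K`-Lipschitz function is therefore at most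
`K` times the mean distance from `x` to a random vertex, hence (Jensen) at most `K` times the
square root of the variance `∑ i, (x i - a i) * (b i - x i)`. By AM-GM on each side, that root is
at most half the diagonal of the box. A function whose gradient has norm `1` on the convex cube is
`1`-Lipschitz there, and the half-diagonal of the cube is `√3 / 2 * L`.
-/

open scoped NNReal

lemma norm_sum_smul_sub_le_of_lipschitzOnWith {κ E F : Type*} [Fintype κ] [PseudoMetricSpace E]
    [SeminormedAddCommGroup F] [NormedSpace ℝ F] {K : ℝ≥0} {s : Set E} {f : E → F}
    (hf : LipschitzOnWith K f s) {w : κ → ℝ} (hw : ∀ k, 0 ≤ w k) (hw_sum : ∑ k, w k = 1)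
    {p : κ → E} (hp : ∀ k, p k ∈ s) {x : E} (hx : x ∈ s) :
    ‖∑ k, w k • f (p k) - f x‖ ≤ K * √(∑ k, w k * dist (p k) x ^ 2) := by
  have jensen : ∑ k, w k * dist (p k) x ≤ √(∑ k, w k * dist (p k) x ^ 2) :=
    Real.le_sqrt_of_sq_le <| Real.pow_arith_mean_le_arith_mean_pow_of_even _ _ _
      (fun k _ ↦ hw k) hw_sum even_two
  calc ‖∑ k, w k • f (p k) - f x‖
      = ‖∑ k, w k • (f (p k) - f x)‖ := by
        simp only [smul_sub, Finset.sum_sub_distrib, ← Finset.sum_smul, hw_sum, one_smul]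
    _ ≤ ∑ k, w k * (K * dist (p k) x) := by
        refine norm_sum_le_of_le _ fun k _ ↦ ?_
        rw [norm_smul, Real.norm_of_nonneg (hw k), ← dist_eq_norm]
        exact mul_le_mul_of_nonneg_left (hf.dist_le_mul _ (hp k) _ hx) (hw k)
    _ = K * ∑ k, w k * dist (p k) x := by
        simp only [Finset.mul_sum, mul_left_comm]
    _ ≤ K * √(∑ k, w k * dist (p k) x ^ 2) := by gcongr

lemma lipschitzOnWith_of_norm_gradient_le {E : Type*} [NormedAddCommGroup E]
    [InnerProductSpace ℝ E] [CompleteSpace E] {s : Set E} (hs : Convex ℝ s) {K : ℝ≥0} {f : E → ℝ}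
    (hf : ∀ z ∈ s, DifferentiableAt ℝ f z) (hgrad : ∀ z ∈ s, ‖gradient f z‖ ≤ K) :
    LipschitzOnWith K f s :=
  hs.lipschitzOnWith_of_nnnorm_fderiv_le hf fun z hz ↦ by
    simpa only [gradient, LinearIsometryEquiv.norm_map, ← NNReal.coe_le_coe, coe_nnnorm]
      using hgrad z hz

lemma sum_pi_prod_mul_apply {ι κ R : Type*} [Fintype ι] [DecidableEq ι] [Fintype κ] [CommSemiring R]
    {p : ι → κ → R} (hp : ∀ i, ∑ k, p i k = 1) (i : ι) (g : κ → R) :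
    ∑ v : ι → κ, (∏ j, p j (v j)) * g (v i) = ∑ k, p i k * g k := by
  calc ∑ v : ι → κ, (∏ j, p j (v j)) * g (v i)
      = ∑ v : ι → κ, ∏ j, p j (v j) * if j = i then g (v j) else 1 := by
        simp only [Finset.prod_mul_distrib, Finset.prod_ite_eq', Finset.mem_univ, if_true]
    _ = ∏ j, ∑ k, p j k * if j = i then g k else 1 :=
        (Fintype.prod_sum fun j k ↦ p j k * if j = i then g k else 1).symm
    _ = ∑ k, p i k * g k := by
        rw [Finset.prod_eq_single_of_mem i (Finset.mem_univ i) fun j _ hj ↦ by simp [hj, hp]]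
        simp only [if_true]

section Box

variable {ι : Type*}

/-- The closed axis-parallel box with opposite corners `a` and `b`. -/
def coordBox (a b : EuclideanSpace ℝ ι) : Set (EuclideanSpace ℝ ι) :=
  {y | ∀ i, y i ∈ Set.Icc (a i) (b i)}

/-- The vertex of `coordBox a b` indexed by `v`: `true` selects the coordinate of `b`, `false`
that of `a`. -/
def boxVertex (a b : EuclideanSpace ℝ ι) (v : ι → Bool) : EuclideanSpace ℝ ι :=
  WithLp.toLp 2 fun i ↦ if v i then b i else a i

/-- The linear interpolation weights at `x i` on the `i`-th side of `coordBox a b`: `true` gives the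
weight of the endpoint `b i`, `false` that of `a i`. On a degenerate side, where `a i = b i`, both
weights are `0`. -/
noncomputable def axisWeight (a b x : EuclideanSpace ℝ ι) (i : ι) (ε : Bool) : ℝ :=
  if ε then (x i - a i) / (b i - a i) else (b i - x i) / (b i - a i)

/-- The weight of the vertex `boxVertex a b v` in multilinear interpolation at `x`. -/
noncomputable def multilinearWeight [Fintype ι] (a b x : EuclideanSpace ℝ ι) (v : ι → Bool) : ℝ :=
  ∏ i, axisWeight a b x i (v i)

/-- The multilinear interpolant of the values of `d` at the vertices of `coordBox a b`. -/
noncomputable def multilinearInterpolant [Fintype ι] [DecidableEq ι] {F : Type*} [AddCommGroup F]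
    [Module ℝ F] (a b : EuclideanSpace ℝ ι) (d : EuclideanSpace ℝ ι → F)
    (x : EuclideanSpace ℝ ι) : F :=
  ∑ v, multilinearWeight a b x v • d (boxVertex a b v)

variable {a b x : EuclideanSpace ℝ ι}

lemma convex_coordBox : Convex ℝ (coordBox a b) := fun _ hy _ hz _ _ hs ht hst i ↦
  convex_Icc (a i) (b i) (hy i) (hz i) hs ht hst

lemma boxVertex_mem_coordBox (hab : ∀ i, a i ≤ b i) (v : ι → Bool) :
    boxVertex a b v ∈ coordBox a b := by
  intro i
  by_cases hv : v i <;> simp [boxVertex, hv, hab i]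

lemma axisWeight_nonneg (hx : x ∈ coordBox a b) (i : ι) (ε : Bool) :
    0 ≤ axisWeight a b x i ε := by
  obtain ⟨hax, hxb⟩ := hx i
  have hab : 0 ≤ b i - a i := sub_nonneg.2 (hax.trans hxb)
  cases ε
  · exact div_nonneg (sub_nonneg.2 hxb) hab
  · exact div_nonneg (sub_nonneg.2 hax) hab

lemma sum_axisWeight {i : ι} (hab : a i ≠ b i) : ∑ ε, axisWeight a b x i ε = 1 := by
  have := sub_ne_zero.2 hab.symm
  simp only [Fintype.sum_bool, axisWeight, if_true, Bool.false_eq_true, if_false]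
  field_simp
  ring

lemma sum_axisWeight_mul_sq {i : ι} (hab : a i ≠ b i) :
    ∑ ε, axisWeight a b x i ε * ((if ε then b i else a i) - x i) ^ 2 =
      (x i - a i) * (b i - x i) := by
  have := sub_ne_zero.2 hab.symm
  simp only [Fintype.sum_bool, axisWeight, if_true, Bool.false_eq_true, if_false]
  field_simp
  ring

variable [Fintype ι]

lemma multilinearWeight_nonneg (hx : x ∈ coordBox a b) (v : ι → Bool) :
    0 ≤ multilinearWeight a b x v :=
  Finset.prod_nonneg fun i _ ↦ axisWeight_nonneg hx i (v i)

lemma sum_sub_mul_sub_le_sq_half_dist :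
    ∑ i, (x i - a i) * (b i - x i) ≤ (dist a b / 2) ^ 2 := by
  rw [div_pow, EuclideanSpace.dist_sq_eq, Finset.sum_div]
  refine Finset.sum_le_sum fun i _ ↦ ?_
  rw [Real.dist_eq, sq_abs]
  linarith [four_mul_le_sq_add (x i - a i) (b i - x i)]

variable [DecidableEq ι]

lemma sum_multilinearWeight (hab : ∀ i, a i ≠ b i) : ∑ v, multilinearWeight a b x v = 1 := by
  simp only [multilinearWeight, ← Fintype.prod_sum, sum_axisWeight (hab _), Finset.prod_const_one]

lemma sum_multilinearWeight_mul_dist_sq (hab : ∀ i, a i ≠ b i) :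
    ∑ v, multilinearWeight a b x v * dist (boxVertex a b v) x ^ 2 =
      ∑ i, (x i - a i) * (b i - x i) := by
  calc ∑ v, multilinearWeight a b x v * dist (boxVertex a b v) x ^ 2
      = ∑ i, ∑ v : ι → Bool,
          (∏ j, axisWeight a b x j (v j)) * ((if v i then b i else a i) - x i) ^ 2 := by
        simp only [dist_eq_norm, EuclideanSpace.real_norm_sq_eq, PiLp.sub_apply, boxVertex,
          Finset.mul_sum, multilinearWeight]
        exact Finset.sum_comm
    _ = ∑ i, (x i - a i) * (b i - x i) := Finset.sum_congr rfl fun i _ ↦ by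
        rw [sum_pi_prod_mul_apply (fun j ↦ sum_axisWeight (hab j)) i
          fun ε ↦ ((if ε then b i else a i) - x i) ^ 2, sum_axisWeight_mul_sq (hab i)]

end Box

theorem trilinear_error_bound_eikonal_general {ι F : Type*} [Fintype ι] [DecidableEq ι]
    [SeminormedAddCommGroup F] [NormedSpace ℝ F] {a b : EuclideanSpace ℝ ι}
    (hab : ∀ i, a i < b i) {K : ℝ≥0} {d : EuclideanSpace ℝ ι → F}
    (hd : LipschitzOnWith K d (coordBox a b)) {x : EuclideanSpace ℝ ι} (hx : x ∈ coordBox a b) :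
    ‖multilinearInterpolant a b d x - d x‖ ≤ K * (dist a b / 2) := by
  have hne (i : ι) : a i ≠ b i := (hab i).ne
  calc ‖multilinearInterpolant a b d x - d x‖
      ≤ K * √(∑ v, multilinearWeight a b x v * dist (boxVertex a b v) x ^ 2) :=
        norm_sum_smul_sub_le_of_lipschitzOnWith hd (multilinearWeight_nonneg hx)
          (sum_multilinearWeight hne) (boxVertex_mem_coordBox fun i ↦ (hab i).le) hx
    _ ≤ K * (dist a b / 2) := by
        rw [sum_multilinearWeight_mul_dist_sq hne]
        gcongr
        exact Real.sqrt_le_iff.2 ⟨by positivity, sum_sub_mul_sub_le_sq_half_dist⟩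

section Cube

/-- The corner `(L, L, L)` of the cube `[0, L]³`. -/
noncomputable def cubeCorner (L : ℝ) : EuclideanSpace ℝ (Fin 3) :=
  WithLp.toLp 2 fun _ ↦ L

lemma cubeVertex_eq_boxVertex (L : ℝ) (v : Fin 3 → Bool) :
    cubeVertex L v = boxVertex 0 (cubeCorner L) v := rfl

lemma triWeight_eq_multilinearWeight (L : ℝ) (v : Fin 3 → Bool) (x : EuclideanSpace ℝ (Fin 3)) :
    triWeight L v x = multilinearWeight 0 (cubeCorner L) x v := by
  simp only [triWeight, multilinearWeight, axisWeight, cubeCorner, PiLp.zero_apply, sub_zero]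

lemma sum_triWeight_mul_eq_multilinearInterpolant (L : ℝ) (d : EuclideanSpace ℝ (Fin 3) → ℝ)
    (x : EuclideanSpace ℝ (Fin 3)) :
    ∑ v, triWeight L v x * d (cubeVertex L v) =
      multilinearInterpolant 0 (cubeCorner L) d x := by
  simp only [triWeight_eq_multilinearWeight, cubeVertex_eq_boxVertex, multilinearInterpolant,
    smul_eq_mul]

lemma dist_zero_cubeCorner {L : ℝ} (hL : 0 ≤ L) : dist 0 (cubeCorner L) = √3 * L := by
  rw [dist_zero_left, cubeCorner, EuclideanSpace.norm_eq]
  simp [hL]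

end Cube

/-- Error bound for trilinear interpolation of an Eikonal function on the cube
`Q = [0,L]³`: if `d` is differentiable on an open set containing `Q` with
`‖∇d‖ = 1` on `Q`, then the trilinear interpolant
`d_tl(x) = Σ_v λ_v(x) * d(x_v)` satisfies `|d_tl(x) - d(x)| ≤ (√3/2) * L`
for all `x ∈ Q`. -/
theorem trilinear_error_bound_eikonal
    (L : ℝ) (hL : 0 < L)
    (Q : Set (EuclideanSpace ℝ (Fin 3)))
    (hQ : Q = {y : EuclideanSpace ℝ (Fin 3) | ∀ i, y i ∈ Set.Icc (0 : ℝ) L})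
    (U : Set (EuclideanSpace ℝ (Fin 3))) (hU : IsOpen U) (hQU : Q ⊆ U)
    (d : EuclideanSpace ℝ (Fin 3) → ℝ)
    (hd : DifferentiableOn ℝ d U)
    (hEik : ∀ z ∈ Q, ‖gradient d z‖ = 1)
    (x : EuclideanSpace ℝ (Fin 3)) (hx : x ∈ Q) :
    |(∑ v : Fin 3 → Bool, triWeight L v x * d (cubeVertex L v)) - d x| ≤
      Real.sqrt 3 / 2 * L := by
  subst hQ
  have hLip : LipschitzOnWith 1 d (coordBox 0 (cubeCorner L)) :=
    lipschitzOnWith_of_norm_gradient_le convex_coordBox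
      (fun z hz ↦ hd.differentiableAt (hU.mem_nhds (hQU hz))) fun z hz ↦ (hEik z hz).le
  simpa only [sum_triWeight_mul_eq_multilinearInterpolant, Real.norm_eq_abs, NNReal.coe_one,
    one_mul, dist_zero_cubeCorner hL.le, mul_div_right_comm] using
    trilinear_error_bound_eikonal_general (fun _ ↦ hL) hLip hx
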